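/- arXiv:1903.08160 — 2 statements merged into one kernel-verified Lean document; each statement's English description precedes it below -/
import Mathlib

section
/- Let X be a Tychonoff space with iw(X) = ℵ₀. If X satisfies S₁(𝒦, Γ) — i.e., for every sequence (𝒰_n) of open k-covers of X one can choose U_n ∈ 𝒰_n such that {U_n : n ∈ ℕ} is a γ-cover of X — then the bitopological function space (C(X), τ_k, τ_p) satisfies S₁(𝒟^k, 𝒮^p): for every sequence (D_n) of dense subsets of C_k(X) one can choose f_n ∈ D_n such that {f_n : n ∈ ℕ} is sequentially dense in C_p(X), i.e., every g ∈ C(X) is the pointwise limit of a sequence of elements of {f_n : n ∈ ℕ}. -/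
open Set Filter Topology TopologicalSpace

universe u

/-- The topology of pointwise convergence on `C(X, ℝ)`. -/
def pointwiseTopology (X : Type u) [TopologicalSpace X] : TopologicalSpace C(X, ℝ) :=
  TopologicalSpace.induced (fun f : C(X, ℝ) => (f : X → ℝ)) Pi.topologicalSpace

/-- `𝒰` is an (open) k-cover of `X`: a nontrivial open cover such that every compact
subset of `X` is contained in some member of `𝒰`. -/
def IsKCover {X : Type u} [TopologicalSpace X] (𝒰 : Set (Set X)) : Prop :=
  (∀ U ∈ 𝒰, IsOpen U) ∧ ⋃₀ 𝒰 = Set.univ ∧ Set.univ ∉ 𝒰 ∧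
    ∀ K : Set X, IsCompact K → ∃ U ∈ 𝒰, K ⊆ U

/-- `𝒰` is an (open) ω-cover of `X`: a nontrivial open cover such that every finite
subset of `X` is contained in some member of `𝒰`. -/
def IsOmegaCover {X : Type u} [TopologicalSpace X] (𝒰 : Set (Set X)) : Prop :=
  (∀ U ∈ 𝒰, IsOpen U) ∧ ⋃₀ 𝒰 = Set.univ ∧ Set.univ ∉ 𝒰 ∧
    ∀ F : Set X, F.Finite → ∃ U ∈ 𝒰, F ⊆ U

/-- `𝒰` is an (open) γ-cover of `X`: an infinite open cover such that for every finite
subset `F` of `X`, all but finitely many members of `𝒰` contain `F`. -/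
def IsGammaCover {X : Type u} [TopologicalSpace X] (𝒰 : Set (Set X)) : Prop :=
  (∀ U ∈ 𝒰, IsOpen U) ∧ ⋃₀ 𝒰 = Set.univ ∧ 𝒰.Infinite ∧
    ∀ F : Set X, F.Finite → {U ∈ 𝒰 | ¬ F ⊆ U}.Finite

/-- `iw(X) = ℵ₀`: there is a second-countable Tychonoff space `Y` and a continuous
bijection (one-to-one and onto map) from `X` to `Y`. -/
def CountableIWeight (X : Type u) [TopologicalSpace X] : Prop :=
  ∃ (Y : Type u) (_ : TopologicalSpace Y), SecondCountableTopology Y ∧ T35Space Y ∧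
    ∃ f : X → Y, Continuous f ∧ Function.Bijective f

/-- The selection principle `S₁(𝒜, ℬ)`. -/
def S1sel {α : Type u} (𝒜 ℬ : Set (Set α)) : Prop :=
  ∀ A : ℕ → Set α, (∀ n, A n ∈ 𝒜) →
    ∃ b : ℕ → α, (∀ n, b n ∈ A n) ∧ Set.range b ∈ ℬ

/-- The selection principle `S_fin(𝒜, ℬ)`. -/
def SfinSel {α : Type u} (𝒜 ℬ : Set (Set α)) : Prop :=
  ∀ A : ℕ → Set α, (∀ n, A n ∈ 𝒜) →
    ∃ B : ℕ → Set α, (∀ n, (B n).Finite ∧ B n ⊆ A n) ∧ (⋃ n, B n) ∈ ℬ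

/-- A strategy for player ONE in the game `G₁(𝒜, ℬ)` (a function from finite sequences
of TWO's moves to sets) is winning if it always plays members of `𝒜` and ONE wins every
play in which he follows it. -/
def IsWinningStrategyOneG1 {α : Type u} (𝒜 ℬ : Set (Set α)) (σ : List α → Set α) : Prop :=
  (∀ h : List α, σ h ∈ 𝒜) ∧
    ∀ b : ℕ → α, (∀ n, b n ∈ σ (List.ofFn fun i : Fin n => b i)) → Set.range b ∉ ℬ

/-- A strategy for player ONE in the game `G_fin(𝒜, ℬ)` (a function from finite sequences
of TWO's moves, which are finite subsets, to sets) is winning if it always plays members of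
`𝒜` and ONE wins every play in which he follows it. -/
def IsWinningStrategyOneGfin {α : Type u} (𝒜 ℬ : Set (Set α)) (σ : List (Set α) → Set α) :
    Prop :=
  (∀ h : List (Set α), σ h ∈ 𝒜) ∧
    ∀ B : ℕ → Set α,
      (∀ n, (B n).Finite ∧ B n ⊆ σ (List.ofFn fun i : Fin n => B i)) → (⋃ n, B n) ∉ ℬ

/-- `A ⊆ C(X, ℝ)` is sequentially dense in `C_p(X)`: every continuous function is the
pointwise limit of a sequence from `A`. -/
def SeqDenseP (X : Type u) [TopologicalSpace X] (A : Set C(X, ℝ)) : Prop :=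
  ∀ g : C(X, ℝ), ∃ s : ℕ → C(X, ℝ), (∀ n, s n ∈ A) ∧
    Filter.Tendsto s Filter.atTop (@nhds _ (pointwiseTopology X) g)

/-- The family `Ω^k_0` of subsets of `C(X, ℝ)` not containing `0` but having `0` in their
closure with respect to the compact-open topology. -/
def OmegaKZero (X : Type u) [TopologicalSpace X] (A : Set C(X, ℝ)) : Prop :=
  (0 : C(X, ℝ)) ∉ A ∧ (0 : C(X, ℝ)) ∈ closure A

/-- The family `Ω^p_0` of subsets of `C(X, ℝ)` not containing `0` but having `0` in their
closure with respect to the topology of pointwise convergence. -/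
def OmegaPZero (X : Type u) [TopologicalSpace X] (A : Set C(X, ℝ)) : Prop :=
  (0 : C(X, ℝ)) ∉ A ∧ (0 : C(X, ℝ)) ∈ @closure _ (pointwiseTopology X) A

/-- The family `Γ^p_0` of infinite subsets `A` of `C(X, ℝ)` with `0 ∉ A` such that every
neighborhood of `0` in the topology of pointwise convergence contains all but finitely
many elements of `A`. -/
def GammaPZero (X : Type u) [TopologicalSpace X] (A : Set C(X, ℝ)) : Prop :=
  A.Infinite ∧ (0 : C(X, ℝ)) ∉ A ∧
    ∀ N ∈ @nhds _ (pointwiseTopology X) (0 : C(X, ℝ)), {f ∈ A | f ∉ N}.Finite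

/-!
If `g` lies in the closure of `D` in `C_k(X)`, then for each `ε > 0` the open sets
`{x | dist (f x) (g x) < ε}` with `f ∈ D` absorb all compact sets. Applying `S₁(𝒦, Γ)` to these
families with `ε = 1, 1/2, 1/3, …` therefore turns sets `D n` clustering at `g n` in `C_k(X)` into
functions `f n ∈ D n` whose distance to `g n` tends to `0` at every point.

Since `iw(X) = ℵ₀`, the space `C_k(X)` has a dense sequence `q`. Given dense sets `D n`, let
`g n` run through `q` with every `q m` repeated infinitely often. A second selection, from the
constant sequence `range q`, gives terms `q (m j)` tending pointwise to any prescribed function,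
and `q (m j)` can then be replaced by an `f n` with `n ≥ j` and `g n = q (m j)`.
-/

universe v

section CompactOpen

variable {X E : Type*} [TopologicalSpace X]

theorem eventually_forall_mem_dist_lt [PseudoMetricSpace E] {K : Set X} (hK : IsCompact K)
    (g : C(X, E)) {ε : ℝ} (hε : 0 < ε) : ∀ᶠ f in 𝓝 g, ∀ x ∈ K, dist (f x) (g x) < ε :=
  ((Metric.tendstoUniformlyOn_iff.mp
    (ContinuousMap.tendsto_iff_forall_isCompact_tendstoUniformlyOn.mp tendsto_id K hK)) ε hε).mono
    fun f hf x hx ↦ dist_comm (f x) (g x) ▸ hf x hx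

theorem dense_of_forall_isCompact_exists_eqOn [TopologicalSpace E] {D : Set C(X, E)}
    (hD : ∀ (g : C(X, E)) (K : Set X), IsCompact K → ∃ f ∈ D, EqOn f g K) : Dense D := by
  intro g
  refine (mem_closure_iff_nhds_basis g.hasBasis_nhds).mpr fun S ⟨hSfin, hS⟩ ↦ ?_
  have hK : IsCompact (⋃ p ∈ S, p.1) := hSfin.isCompact_biUnion fun p hp ↦ (hS p.1 p.2 hp).1
  obtain ⟨f, hfD, hfg⟩ := hD g _ hK
  refine ⟨f, hfD, mem_iInter₂.mpr fun p hp ↦ ?_⟩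
  exact (hS p.1 p.2 hp).2.2.congr (hfg.mono (subset_biUnion_of_mem (u := Prod.fst) hp)).symm

theorem denseRange_comp_of_injective {Q : Type v} [TopologicalSpace Q] [T4Space Q]
    [TopologicalSpace E] [TietzeExtension.{v} E] {ι : C(X, Q)} (hι : Function.Injective ι) :
    DenseRange fun G : C(Q, E) ↦ G.comp ι := by
  refine dense_of_forall_isCompact_exists_eqOn fun g K hK ↦ ?_
  have : CompactSpace K := isCompact_iff_compactSpace.mp hK
  have hemb : IsClosedEmbedding (ι.restrict K) :=
    (ι.restrict K).continuous.isClosedEmbedding (hι.comp Subtype.val_injective)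
  obtain ⟨G, hG⟩ := (g.restrict K).exists_extension' hemb
  exact ⟨G.comp ι, mem_range_self G, fun x hx ↦ congrFun hG ⟨x, hx⟩⟩

end CompactOpen

theorem CountableIWeight.separableSpace {X : Type u} [TopologicalSpace X]
    (hX : CountableIWeight X) : SeparableSpace C(X, ℝ) := by
  obtain ⟨Y, _, _, _, f, hf, hfbij⟩ := hX
  let _ : MetricSpace Y := metrizableSpaceMetric Y
  obtain ⟨F, hF⟩ := Metric.PiNatEmbed.exists_embedding_to_hilbert_cube (X := Y)
  let ι : C(X, ℕ → unitInterval) := ⟨F ∘ f, hF.continuous.comp hf⟩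
  have hι : Function.Injective ι := hF.injective.comp hfbij.injective
  exact (denseRange_comp_of_injective hι).separableSpace ι.continuous_precomp

theorem tendsto_nhds_pointwiseTopology_iff {X : Type u} {α : Type*} [TopologicalSpace X]
    {l : Filter α} {s : α → C(X, ℝ)} {g : C(X, ℝ)} :
    Tendsto s l (@nhds _ (pointwiseTopology X) g) ↔
      ∀ x, Tendsto (fun a ↦ s a x) l (𝓝 (g x)) := by
  rw [pointwiseTopology, nhds_induced, tendsto_comap_iff, tendsto_pi_nhds]
  rfl

theorem exists_strictMono_injective_comp_of_infinite_range {α : Type*} {u : ℕ → α}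
    (hu : (range u).Infinite) : ∃ φ : ℕ → ℕ, StrictMono φ ∧ Function.Injective (u ∘ φ) := by
  obtain ⟨s, -, hs⟩ := exists_subset_bijOn univ u
  rw [image_univ] at hs
  have hsinf : s.Infinite := fun hsfin ↦ hu (hs.image_eq ▸ hsfin.image u)
  have hmono : StrictMono (Nat.nth (· ∈ s)) := Nat.nth_strictMono hsinf
  have hmem : ∀ j, Nat.nth (· ∈ s) j ∈ s := Nat.nth_mem_of_infinite hsinf
  exact ⟨_, hmono, fun i j hij ↦ hmono.injective (hs.injOn (hmem i) (hmem j) hij)⟩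

section Covers

variable {X : Type u} [TopologicalSpace X]

theorem IsGammaCover.exists_strictMono_eventually_mem {W : ℕ → Set X}
    (hW : IsGammaCover (range W)) :
    ∃ φ : ℕ → ℕ, StrictMono φ ∧ ∀ x, ∀ᶠ j in atTop, x ∈ W (φ j) := by
  obtain ⟨-, -, hinf, hfin⟩ := hW
  obtain ⟨φ, hφ, hinj⟩ := exists_strictMono_injective_comp_of_infinite_range hinf
  refine ⟨φ, hφ, fun x ↦ ?_⟩
  have hexc : {j | x ∉ W (φ j)}.Finite :=
    ((hfin {x} (finite_singleton x)).preimage hinj.injOn).subset fun j hj ↦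
      ⟨mem_range_self (φ j), fun hsub ↦ hj (hsub rfl)⟩
  rw [← Nat.cofinite_eq_atTop]
  exact hexc

theorem exists_isOpen_ne_univ_superset_of_isCompact [NoncompactSpace X] {K : Set X}
    (hK : IsCompact K) : ∃ V, IsOpen V ∧ V ≠ univ ∧ K ⊆ V := by
  by_contra! hV
  refine noncompact_univ X (isCompact_of_finite_subcover fun U hU hcov ↦ ?_)
  obtain ⟨t, ht⟩ := hK.elim_finite_subcover U hU ((subset_univ K).trans hcov)
  refine ⟨t, ?_⟩
  by_contra hne
  exact hV _ (isOpen_biUnion fun i _ ↦ hU i) (fun h ↦ hne h.ge) ht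

/-- An open k-cover except that `X` itself may be a member. The families
`{x | dist (f x) (g x) < ε}`, `f ∈ D`, are of this kind: `X` belongs to them as soon as some
`f ∈ D` is uniformly `ε`-close to `g`. -/
structure IsWeakKCover (𝒰 : Set (Set X)) : Prop where
  isOpen : ∀ U ∈ 𝒰, IsOpen U
  exists_superset : ∀ K, IsCompact K → ∃ U ∈ 𝒰, K ⊆ U

theorem IsWeakKCover.isKCover {𝒰 : Set (Set X)} (h𝒰 : IsWeakKCover 𝒰) (huniv : univ ∉ 𝒰) :
    IsKCover 𝒰 := by
  refine ⟨h𝒰.isOpen, eq_univ_of_forall fun x ↦ ?_, huniv, h𝒰.exists_superset⟩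
  obtain ⟨U, hU, hxU⟩ := h𝒰.exists_superset {x} isCompact_singleton
  exact ⟨U, hU, hxU rfl⟩

/-- The intersections `V ∩ U 0 ∩ … ∩ U n` with `U i ∈ 𝒰 i` and `V` a proper open subset of `X`.
The factor `V` keeps `X` itself out of the family. Intersecting over all `i ≤ n` lets a selection
along a subsequence `φ` of the indices serve every index, because `j ≤ φ j`. -/
def properInters (𝒰 : ℕ → Set (Set X)) (n : ℕ) : Set (Set X) :=
  {W | ∃ (V : Set X) (U : ℕ → Set X),
    IsOpen V ∧ V ≠ univ ∧ (∀ i, U i ∈ 𝒰 i) ∧ W = V ∩ ⋂ i ∈ Iic n, U i}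

theorem isKCover_properInters [NoncompactSpace X] {𝒰 : ℕ → Set (Set X)}
    (h𝒰 : ∀ i, IsWeakKCover (𝒰 i)) (n : ℕ) : IsKCover (properInters 𝒰 n) := by
  refine IsWeakKCover.isKCover ⟨?_, fun K hK ↦ ?_⟩ ?_
  · rintro _ ⟨V, U, hV, -, hU, rfl⟩
    exact hV.inter ((finite_Iic n).isOpen_biInter fun i _ ↦ (h𝒰 i).isOpen _ (hU i))
  · obtain ⟨V, hV, hVne, hKV⟩ := exists_isOpen_ne_univ_superset_of_isCompact hK
    choose U hU hKU using fun i ↦ (h𝒰 i).exists_superset K hK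
    exact ⟨_, ⟨V, U, hV, hVne, hU, rfl⟩, subset_inter hKV (subset_iInter₂ fun i _ ↦ hKU i)⟩
  · rintro ⟨V, U, -, hVne, -, hW⟩
    exact hVne (univ_subset_iff.mp (hW ▸ inter_subset_left))

theorem exists_selection_eventually_mem
    (h : S1sel {𝒰 : Set (Set X) | IsKCover 𝒰} {𝒰 : Set (Set X) | IsGammaCover 𝒰})
    {𝒰 : ℕ → Set (Set X)} (h𝒰 : ∀ n, IsWeakKCover (𝒰 n)) :
    ∃ U : ℕ → Set X, (∀ n, U n ∈ 𝒰 n) ∧ ∀ x, ∀ᶠ n in atTop, x ∈ U n := by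
  by_cases hX : CompactSpace X
  · choose U hU hsub using fun n ↦ (h𝒰 n).exists_superset univ isCompact_univ
    exact ⟨U, hU, fun x ↦ .of_forall fun n ↦ hsub n (mem_univ x)⟩
  have : NoncompactSpace X := not_compactSpace_iff.mp hX
  obtain ⟨W, hW, hγ⟩ := h (properInters 𝒰) (isKCover_properInters h𝒰)
  choose V U _ _ hU hWU using hW
  obtain ⟨φ, hφ, hmem⟩ := IsGammaCover.exists_strictMono_eventually_mem hγ
  refine ⟨fun j ↦ U (φ j) j, fun j ↦ hU (φ j) j, fun x ↦ (hmem x).mono fun j hj ↦ ?_⟩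
  rw [hWU] at hj
  exact mem_iInter₂.mp hj.2 j hφ.le_apply

theorem isWeakKCover_image_dist_lt {E : Type*} [PseudoMetricSpace E] {D : Set C(X, E)}
    {g : C(X, E)} (hg : g ∈ closure D) {ε : ℝ} (hε : 0 < ε) :
    IsWeakKCover ((fun f : C(X, E) ↦ {x | dist (f x) (g x) < ε}) '' D) := by
  refine ⟨?_, fun K hK ↦ ?_⟩
  · rintro _ ⟨f, -, rfl⟩
    exact isOpen_lt (by fun_prop) continuous_const
  · obtain ⟨f, hfD, hfK⟩ := ((mem_closure_iff_frequently.mp hg).and_eventually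
      (eventually_forall_mem_dist_lt hK g hε)).exists
    exact ⟨_, mem_image_of_mem _ hfD, hfK⟩

theorem exists_selection_tendsto_dist {E : Type*} [PseudoMetricSpace E]
    (h : S1sel {𝒰 : Set (Set X) | IsKCover 𝒰} {𝒰 : Set (Set X) | IsGammaCover 𝒰})
    {D : ℕ → Set C(X, E)} {g : ℕ → C(X, E)} (hg : ∀ n, g n ∈ closure (D n)) :
    ∃ f : ℕ → C(X, E), (∀ n, f n ∈ D n) ∧
      ∀ x, Tendsto (fun n ↦ dist (f n x) (g n x)) atTop (𝓝 0) := by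
  obtain ⟨U, hU, hmem⟩ := exists_selection_eventually_mem h
    fun n ↦ isWeakKCover_image_dist_lt (hg n) (Nat.one_div_pos_of_nat (α := ℝ) (n := n))
  choose f hfD hfU using hU
  refine ⟨f, hfD, fun x ↦ squeeze_zero' (.of_forall fun n ↦ dist_nonneg) ?_
    tendsto_one_div_add_atTop_nhds_zero_nat⟩
  filter_upwards [hmem x] with n hn
  rw [← hfU] at hn
  exact le_of_lt hn

end Covers

theorem statement16_general (X : Type u) [TopologicalSpace X] [SeparableSpace C(X, ℝ)]
    (h : S1sel {𝒰 : Set (Set X) | IsKCover 𝒰} {𝒰 : Set (Set X) | IsGammaCover 𝒰}) :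
    S1sel {D : Set C(X, ℝ) | Dense D} {A : Set C(X, ℝ) | SeqDenseP X A} := by
  intro D hD
  let q := denseSeq C(X, ℝ)
  obtain ⟨f, hfD, hfq⟩ := exists_selection_tendsto_dist h fun n ↦ hD n (q n.unpair.1)
  refine ⟨f, hfD, fun g ↦ ?_⟩
  obtain ⟨p, hpq, hpg⟩ := exists_selection_tendsto_dist h fun _ ↦ denseRange_denseSeq C(X, ℝ) g
  choose m hm using hpq
  have hpair : Tendsto (fun j ↦ Nat.pair (m j) j) atTop atTop :=
    tendsto_atTop_mono (fun j ↦ Nat.right_le_pair (m j) j) tendsto_id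
  refine ⟨fun j ↦ f (Nat.pair (m j) j), fun j ↦ mem_range_self _,
    tendsto_nhds_pointwiseTopology_iff.mpr fun x ↦ ?_⟩
  have hfp : Tendsto (fun j ↦ dist (f (Nat.pair (m j) j) x) (p j x)) atTop (𝓝 0) := by
    simpa only [Function.comp_def, Nat.unpair_pair, q, hm] using (hfq x).comp hpair
  have hpx : Tendsto (fun j ↦ p j x) atTop (𝓝 (g x)) :=
    tendsto_iff_dist_tendsto_zero.mpr (hpg x)
  exact (tendsto_iff_of_dist hfp).mpr hpx

theorem statement16 (X : Type u) [TopologicalSpace X] [T35Space X]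
    (hiw : CountableIWeight X)
    (h : S1sel {𝒰 : Set (Set X) | IsKCover 𝒰} {𝒰 : Set (Set X) | IsGammaCover 𝒰}) :
    S1sel {D : Set C(X, ℝ) | Dense D} {A : Set C(X, ℝ) | SeqDenseP X A} := by
  have := hiw.separableSpace
  exact statement16_general X h
end

section
/- Let X be a Tychonoff space. If the bitopological function space (C(X), τ_k, τ_p) satisfies (𝒟^k choose 𝒮^p) — i.e., every dense subset of C_k(X) contains a countable subset that is sequentially dense in C_p(X) — then X satisfies (𝒦 choose Γ): every open k-cover of X contains a countable subfamily that is a γ-cover of X (i.e., X is a γ_k-set). -/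
open Set Filter Topology TopologicalSpace

universe u

/-!
Functions equal to `1` off some member of a k-cover are dense in `C_k(X)`: on a compact set `K`,
contained in a member `U` say, any `g` can be kept unchanged while being cut off to `1` outside `U`,
since a completely regular space separates `K` from the complement of `U`. A sequence of such
functions converging pointwise to `0` selects sets `U n` from the cover; at each point `x` the
values are eventually different from `1`, so `x` lies in `U n` for all large `n`. A fixed proper
subset of `X` occurs only finitely often in such a sequence, so its range is infinite.
-/

section CompactOpen

variable {X Y E : Type*} [TopologicalSpace X] [TopologicalSpace Y]

/- Compactness of the Stone–Čech compactification makes the image of `K` closed, which reduces the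
claim to Urysohn's lemma. -/
lemma exists_continuousMap_eqOn_one_of_isCompact_eqOn_zero_compl [CompletelyRegularSpace X]
    {K U : Set X} (hK : IsCompact K) (hU : IsOpen U) (hKU : K ⊆ U) :
    ∃ φ : C(X, ℝ), EqOn φ 1 K ∧ EqOn φ 0 Uᶜ := by
  obtain ⟨W, hW, rfl⟩ := (isInducing_stoneCechUnit (X := X)).isOpen_iff.1 hU
  have image_closed : IsClosed (stoneCechUnit '' K) :=
    (hK.image continuous_stoneCechUnit).isClosed
  have disjoint_image : Disjoint Wᶜ (stoneCechUnit '' K) :=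
    disjoint_compl_left_iff_subset.2 (image_subset_iff.2 hKU)
  obtain ⟨φ, hφ0, hφ1, -⟩ :=
    exists_continuous_zero_one_of_isClosed hW.isClosed_compl image_closed disjoint_image
  exact ⟨φ.comp ⟨stoneCechUnit, continuous_stoneCechUnit⟩,
    fun _ hx => hφ1 (mem_image_of_mem _ hx), fun _ hx => hφ0 hx⟩

lemma mem_closure_of_forall_isCompact_exists_eqOn {D : Set C(X, Y)} {g : C(X, Y)}
    (hD : ∀ K : Set X, IsCompact K → ∃ f ∈ D, EqOn f g K) : g ∈ closure D := by
  refine mem_closure_iff_nhds.2 fun N hN => ?_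
  obtain ⟨S, hSfin, hS, hSN⟩ := ContinuousMap.mem_nhds_iff.1 hN
  obtain ⟨f, hfD, hfg⟩ := hD (⋃ p ∈ S, p.1) <|
    hSfin.isCompact_biUnion fun p hp => (hS p.1 p.2 hp).1
  refine ⟨f, hSN fun K V hKV x hx => ?_, hfD⟩
  rw [hfg (mem_biUnion hKV hx)]
  exact (hS K V hKV).2.2 hx

variable [CompletelyRegularSpace X]
  [AddCommGroup E] [Module ℝ E] [TopologicalSpace E] [ContinuousAdd E] [ContinuousSMul ℝ E]

lemma exists_continuousMap_eqOn_of_isCompact_eqOn_compl {K U : Set X} (hK : IsCompact K)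
    (hU : IsOpen U) (hKU : K ⊆ U) (g h : C(X, E)) :
    ∃ f : C(X, E), EqOn f g K ∧ EqOn f h Uᶜ := by
  obtain ⟨φ, hφ1, hφ0⟩ := exists_continuousMap_eqOn_one_of_isCompact_eqOn_zero_compl hK hU hKU
  refine ⟨⟨fun x => φ x • g x + (1 - φ x) • h x, by fun_prop⟩, fun x hx => ?_, fun x hx => ?_⟩
  · simp [hφ1 hx]
  · simp [hφ0 hx]

lemma dense_setOf_exists_mem_eqOn_compl {𝒰 : Set (Set X)} (hopen : ∀ U ∈ 𝒰, IsOpen U)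
    (hcompact : ∀ K : Set X, IsCompact K → ∃ U ∈ 𝒰, K ⊆ U) (h : C(X, E)) :
    Dense {f : C(X, E) | ∃ U ∈ 𝒰, EqOn f h Uᶜ} := by
  refine fun g => mem_closure_of_forall_isCompact_exists_eqOn fun K hK => ?_
  obtain ⟨U, hU, hKU⟩ := hcompact K hK
  obtain ⟨f, hfg, hfh⟩ :=
    exists_continuousMap_eqOn_of_isCompact_eqOn_compl hK (hopen U hU) hKU g h
  exact ⟨f, ⟨U, hU, hfh⟩, hfg⟩

end CompactOpen

lemma tendsto_pointwiseTopology_iff {X ι : Type*} [TopologicalSpace X] {l : Filter ι}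
    {s : ι → C(X, ℝ)} {g : C(X, ℝ)} :
    Tendsto s l (@nhds _ (pointwiseTopology X) g) ↔
      ∀ x, Tendsto (fun i => s i x) l (𝓝 (g x)) := by
  rw [pointwiseTopology, nhds_induced, tendsto_comap_iff, tendsto_pi_nhds]
  rfl

section EventuallyMem

variable {X ι : Type*} [Infinite ι] {U : ι → Set X}

lemma infinite_range_of_forall_eventually_mem (hne : ∀ i, U i ≠ univ)
    (hU : ∀ x, ∀ᶠ i in cofinite, x ∈ U i) : (range U).Infinite := by
  intro hfin
  refine infinite_univ (Finite.of_finite_fibers U (by rwa [image_univ]) ?_)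
  rintro _ ⟨i, -, rfl⟩
  obtain ⟨x, hx⟩ := (ne_univ_iff_exists_notMem _).1 (hne i)
  refine (eventually_cofinite.1 (hU x)).subset ?_
  rintro j ⟨-, hj : U j = U i⟩
  exact fun hxj => hx (hj ▸ hxj)

lemma isGammaCover_range [TopologicalSpace X] (hopen : ∀ i, IsOpen (U i))
    (hne : ∀ i, U i ≠ univ) (hU : ∀ x, ∀ᶠ i in cofinite, x ∈ U i) :
    IsGammaCover (range U) := by
  refine ⟨forall_mem_range.2 hopen, ?_, infinite_range_of_forall_eventually_mem hne hU,
    fun F hF => ?_⟩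
  · rw [sUnion_range, iUnion_eq_univ_iff]
    exact fun x => (hU x).exists
  · have eventually_subset : ∀ᶠ i in cofinite, F ⊆ U i :=
      (eventually_all_finite hF).2 fun x _ => hU x
    refine ((eventually_cofinite.1 eventually_subset).image U).subset ?_
    rintro _ ⟨⟨i, rfl⟩, hi⟩
    exact mem_image_of_mem U hi

end EventuallyMem

theorem statement18_general (X : Type u) [TopologicalSpace X] [CompletelyRegularSpace X]
    (h : ∀ D : Set C(X, ℝ), Dense D → 0 ∈ @seqClosure _ (pointwiseTopology X) D) :
    ∀ 𝒰 : Set (Set X), IsKCover 𝒰 → ∃ 𝒱 ⊆ 𝒰, 𝒱.Countable ∧ IsGammaCover 𝒱 := by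
  rintro 𝒰 ⟨hopen, -, huniv, hcompact⟩
  obtain ⟨s, hs, hs0⟩ := h _ (dense_setOf_exists_mem_eqOn_compl hopen hcompact 1)
  choose U hU𝒰 hsU using hs
  have eventually_mem (x : X) : ∀ᶠ n in cofinite, x ∈ U n := by
    rw [Nat.cofinite_eq_atTop]
    filter_upwards [(tendsto_pointwiseTopology_iff.1 hs0 x).eventually_ne zero_ne_one] with n hn
    by_contra hx
    exact hn (hsU n hx)
  exact ⟨range U, range_subset_iff.2 hU𝒰, countable_range U,
    isGammaCover_range (fun n => hopen _ (hU𝒰 n))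
      (fun n => ne_of_mem_of_not_mem (hU𝒰 n) huniv) eventually_mem⟩

theorem statement18 (X : Type u) [TopologicalSpace X] [T35Space X]
    (h : ∀ D : Set C(X, ℝ), Dense D → ∃ V ⊆ D, V.Countable ∧ SeqDenseP X V) :
    ∀ 𝒰 : Set (Set X), IsKCover 𝒰 → ∃ 𝒱 ⊆ 𝒰, 𝒱.Countable ∧ IsGammaCover 𝒱 := by
  refine statement18_general X fun D hD => ?_
  obtain ⟨V, hVD, -, hV⟩ := h D hD
  exact (hV 0).imp fun s hs => ⟨fun n => hVD (hs.1 n), hs.2⟩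
end
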